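/- arXiv:1610.00927 — 2 statements merged into one kernel-verified Lean document; each statement's English description precedes it below -/
import Mathlib

section
/- Proposition 2.2 (uniqueness): Suppose the initial condition Y₀ ∈ ℝ^m is consistent, i.e., there exists Z₀ ∈ ℝ^p with Y₀ = Q_p · Z₀ + Q · D₀. Then the initial value problem has a unique solution: any sequence Y : ℕ → ℝ^m with F · Y_{k+1} = G · Y_k + V_k for all k ≥ 0 and Y(0) = Y₀ satisfies Y_k = Q_p · J_p^k · Z₀ + Q · D_k for all k ≥ 0; in particular any two solutions with the same initial value Y₀ coincide. -/
open Matrix Finset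

/-!
In the coordinates `X` given by `Y k = Q *ᵥ X k`, multiplying the equation by `P` decouples it into
an explicit recursion `a (k + 1) = J *ᵥ a k + w k`, which is solved forwards from `a 0`, and an
equation `H *ᵥ b (k + 1) = b k + w k`. The latter is solved backwards: substituting
`b k = H *ᵥ b (k + 1) - w k` into itself, nilpotency of `H` makes the dependence on later values of
`b` disappear, so `b` is determined by `w` alone and `a 0` is the only free datum.
-/

section

variable {R ι κ μ ν ρ : Type*}

/-- `Y` solves the descriptor system `F Y_{k+1} = G Y_k + V_k` (a linear difference equation whose
leading coefficient `F` may be singular, or even rectangular). -/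
def IsDescriptorSolution [NonUnitalNonAssocSemiring R] [Fintype ν]
    (F G : Matrix μ ν R) (V : ℕ → μ → R) (Y : ℕ → ν → R) : Prop :=
  ∀ k, F *ᵥ Y (k + 1) = G *ᵥ Y k + V k

/-- The particular solution, with vanishing initial value in the first block, of the descriptor
system with coefficients `fromBlocks 1 0 0 H` and `fromBlocks J 0 0 1` and inhomogeneity `W`, where
`H ^ s = 0`. For `W k = P *ᵥ V k` this is the sequence `D` of the paper. The truncated exponent
`k - i - 1` is exact since `i < k`. -/
def weierstrassParticular [Ring R] [Fintype ι] [Fintype κ] [DecidableEq ι] [DecidableEq κ]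
    (J : Matrix ι ι R) (H : Matrix κ κ R) (s : ℕ) (W : ℕ → ι ⊕ κ → R) (k : ℕ) : ι ⊕ κ → R :=
  Sum.elim (∑ i ∈ range k, (J ^ (k - i - 1)) *ᵥ (W i ∘ Sum.inl))
    (-∑ i ∈ range s, (H ^ i) *ᵥ (W (k + i) ∘ Sum.inr))

theorem toCols₁_mulVec [Semiring R] [Fintype ι] [Fintype κ] (A : Matrix μ (ι ⊕ κ) R) (z : ι → R) :
    A.toCols₁ *ᵥ z = A *ᵥ Sum.elim z 0 := by
  conv_rhs => rw [← fromCols_toCols A, fromCols_mulVec_sumElim, mulVec_zero, add_zero]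

namespace IsDescriptorSolution

theorem mul_mul [Semiring R] [Fintype μ] [Fintype ν] [Fintype ρ]
    {F G : Matrix μ ν R} {V : ℕ → μ → R} {Q : Matrix ν ρ R} {X : ℕ → ρ → R}
    (hX : IsDescriptorSolution F G V (fun k => Q *ᵥ X k)) (P : Matrix κ μ R) :
    IsDescriptorSolution (P * F * Q) (P * G * Q) (fun k => P *ᵥ V k) X := fun k => by
  simpa only [mulVec_mulVec, mulVec_add, Matrix.mul_assoc] using congrArg (P *ᵥ ·) (hX k)

section FromBlocks

variable [NonUnitalNonAssocSemiring R] [Fintype ι] [Fintype κ]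
  {A B : Matrix μ ι R} {A' B' : Matrix ν κ R} {W : ℕ → μ ⊕ ν → R} {X : ℕ → ι ⊕ κ → R}

theorem inl_of_fromBlocks
    (hX : IsDescriptorSolution (fromBlocks A 0 0 A') (fromBlocks B 0 0 B') W X) :
    IsDescriptorSolution A B (fun k => W k ∘ Sum.inl) (fun k => X k ∘ Sum.inl) := fun k => by
  have h := congrArg (· ∘ Sum.inl) (hX k)
  simpa only [fromBlocks_mulVec, zero_mulVec, add_zero, zero_add, Pi.add_comp,
    Sum.elim_comp_inl] using h

theorem inr_of_fromBlocks
    (hX : IsDescriptorSolution (fromBlocks A 0 0 A') (fromBlocks B 0 0 B') W X) :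
    IsDescriptorSolution A' B' (fun k => W k ∘ Sum.inr) (fun k => X k ∘ Sum.inr) := fun k => by
  have h := congrArg (· ∘ Sum.inr) (hX k)
  simpa only [fromBlocks_mulVec, zero_mulVec, add_zero, zero_add, Pi.add_comp,
    Sum.elim_comp_inr] using h

end FromBlocks

theorem eq_pow_mulVec_add_sum [Semiring R] [Fintype ι] [DecidableEq ι]
    {J : Matrix ι ι R} {w a : ℕ → ι → R} (ha : IsDescriptorSolution 1 J w a) (k : ℕ) :
    a k = (J ^ k) *ᵥ a 0 + ∑ i ∈ range k, (J ^ (k - i - 1)) *ᵥ w i := by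
  induction k with
  | zero => simp
  | succ k ih =>
    have shift : J *ᵥ ∑ i ∈ range k, (J ^ (k - i - 1)) *ᵥ w i =
        ∑ i ∈ range k, (J ^ (k + 1 - i - 1)) *ᵥ w i := by
      rw [mulVec_sum]
      refine sum_congr rfl fun i hi => ?_
      have hik : k + 1 - i - 1 = (k - i - 1) + 1 := by have := mem_range.1 hi; omega
      rw [hik, pow_succ', mulVec_mulVec]
    calc a (k + 1) = J *ᵥ a k + w k := by simpa only [one_mulVec] using ha k
      _ = J *ᵥ ((J ^ k) *ᵥ a 0 + ∑ i ∈ range k, (J ^ (k - i - 1)) *ᵥ w i) + w k := by rw [← ih]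
      _ = (J ^ (k + 1)) *ᵥ a 0 + (∑ i ∈ range k, (J ^ (k + 1 - i - 1)) *ᵥ w i + w k) := by
        rw [mulVec_add, shift, mulVec_mulVec, ← pow_succ', add_assoc]
      _ = _ := by simp [sum_range_succ]

section Backward

variable [Ring R] [Fintype κ] [DecidableEq κ] {H : Matrix κ κ R} {w b : ℕ → κ → R}

theorem eq_pow_mulVec_sub_sum (hb : IsDescriptorSolution H 1 w b) (k n : ℕ) :
    b k = (H ^ n) *ᵥ b (k + n) - ∑ i ∈ range n, (H ^ i) *ᵥ w (k + i) := by
  induction n with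
  | zero => simp
  | succ n ih =>
    have step : (H ^ (n + 1)) *ᵥ b (k + (n + 1)) = (H ^ n) *ᵥ b (k + n) + (H ^ n) *ᵥ w (k + n) := by
      rw [pow_succ, ← mulVec_mulVec, ← add_assoc, hb (k + n), one_mulVec, mulVec_add]
    rw [sum_range_succ, step, add_sub_add_right_eq_sub]
    exact ih

theorem eq_neg_sum_of_pow_eq_zero (hb : IsDescriptorSolution H 1 w b) {s : ℕ} (hH : H ^ s = 0)
    (k : ℕ) : b k = -∑ i ∈ range s, (H ^ i) *ᵥ w (k + i) := by
  rw [hb.eq_pow_mulVec_sub_sum k s, hH, zero_mulVec, zero_sub]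

end Backward

section Weierstrass

variable [Ring R] [Fintype ι] [Fintype κ] [DecidableEq ι] [DecidableEq κ]
  {J : Matrix ι ι R} {H : Matrix κ κ R} {s : ℕ}

theorem eq_add_weierstrassParticular {W X : ℕ → ι ⊕ κ → R} (hH : H ^ s = 0)
    (hX : IsDescriptorSolution (fromBlocks 1 0 0 H) (fromBlocks J 0 0 1) W X) (k : ℕ) :
    X k = Sum.elim ((J ^ k) *ᵥ (X 0 ∘ Sum.inl)) 0 + weierstrassParticular J H s W k := by
  have forward := hX.inl_of_fromBlocks.eq_pow_mulVec_add_sum k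
  have backward := hX.inr_of_fromBlocks.eq_neg_sum_of_pow_eq_zero hH k
  rw [weierstrassParticular, ← Sum.elim_add_add, zero_add, ← forward, ← backward,
    Sum.elim_comp_inl_inr]

theorem eq_of_consistent [Fintype μ] {F G : Matrix μ (ι ⊕ κ) R} {P : Matrix (ι ⊕ κ) μ R}
    {Q : Matrix (ι ⊕ κ) (ι ⊕ κ) R} (hQ : IsUnit Q) (hH : H ^ s = 0)
    (hF : P * F * Q = fromBlocks 1 0 0 H) (hG : P * G * Q = fromBlocks J 0 0 1)
    {V : ℕ → μ → R} {Y : ℕ → ι ⊕ κ → R} (hY : IsDescriptorSolution F G V Y) {Z₀ : ι → R}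
    (hY0 : Y 0 = Q.toCols₁ *ᵥ Z₀ + Q *ᵥ weierstrassParticular J H s (fun k => P *ᵥ V k) 0)
    (k : ℕ) :
    Y k = Q.toCols₁ *ᵥ ((J ^ k) *ᵥ Z₀) +
      Q *ᵥ weierstrassParticular J H s (fun k => P *ᵥ V k) k := by
  obtain ⟨Qinv, hQinv⟩ := hQ.exists_right_inv
  obtain ⟨X, rfl⟩ : ∃ X : ℕ → ι ⊕ κ → R, Y = fun k => Q *ᵥ X k :=
    ⟨fun k => Qinv *ᵥ Y k, funext fun k => by rw [mulVec_mulVec, hQinv, one_mulVec]⟩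
  rw [toCols₁_mulVec, ← mulVec_add] at hY0 ⊢
  have initial : X 0 ∘ Sum.inl = Z₀ := by
    rw [mulVec_injective_of_isUnit hQ hY0]
    simp [weierstrassParticular, Pi.add_comp]
  have decoupled := hY.mul_mul P
  rw [hF, hG] at decoupled
  rw [← initial, ← decoupled.eq_add_weierstrassParticular hH k]

end Weierstrass

end IsDescriptorSolution

theorem proposition_2_2_uniqueness_general [Ring R] [Fintype ι] [Fintype κ] [Fintype μ]
    [DecidableEq ι] [DecidableEq κ]
    {F G : Matrix μ (ι ⊕ κ) R} {P : Matrix (ι ⊕ κ) μ R} {Q : Matrix (ι ⊕ κ) (ι ⊕ κ) R}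
    (hQ : IsUnit Q) {J : Matrix ι ι R} {s : ℕ} {H : Matrix κ κ R} (hH : H ^ s = 0)
    (hF : P * F * Q = fromBlocks 1 0 0 H) (hG : P * G * Q = fromBlocks J 0 0 1)
    {V : ℕ → μ → R} {Y₀ : ι ⊕ κ → R} {Z₀ : ι → R}
    (hZ₀ : Y₀ = Q.toCols₁ *ᵥ Z₀ + Q *ᵥ weierstrassParticular J H s (fun k => P *ᵥ V k) 0)
    {Y : ℕ → ι ⊕ κ → R} (hY : IsDescriptorSolution F G V Y) (hY0 : Y 0 = Y₀) :
    (∀ k, Y k = Q.toCols₁ *ᵥ ((J ^ k) *ᵥ Z₀) +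
        Q *ᵥ weierstrassParticular J H s (fun k => P *ᵥ V k) k) ∧
      ∀ Y', IsDescriptorSolution F G V Y' → Y' 0 = Y₀ → Y' = Y := by
  have formula := hY.eq_of_consistent hQ hH hF hG (hY0.trans hZ₀)
  refine ⟨formula, fun Y' hY' hY'0 => funext fun k => ?_⟩
  rw [formula k, hY'.eq_of_consistent hQ hH hF hG (hY'0.trans hZ₀) k]

end

/-- Proposition 2.2: if the initial condition `Y₀ = Q_p Z₀ + Q D₀` is consistent, then
any solution of the initial value problem equals `Y_k = Q_p J_p^k Z₀ + Q D_k`;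
in particular any two solutions with the same initial value coincide. -/
theorem proposition_2_2_uniqueness
    (p q : ℕ) (hp : 1 ≤ p) (hq : 1 ≤ q)
    (F G P Q : Matrix (Fin p ⊕ Fin q) (Fin p ⊕ Fin q) ℝ)
    (hP : IsUnit P) (hQ : IsUnit Q)
    (Jp : Matrix (Fin p) (Fin p) ℝ) (qs : ℕ) (Hq : Matrix (Fin q) (Fin q) ℝ)
    (hH : Hq ^ qs = 0)
    (hF : P * F * Q = Matrix.fromBlocks 1 0 0 Hq)
    (hG : P * G * Q = Matrix.fromBlocks Jp 0 0 1)
    (Qp : Matrix (Fin p ⊕ Fin q) (Fin p) ℝ) (hQp : Qp = Q.submatrix id Sum.inl)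
    (P1 : Matrix (Fin p) (Fin p ⊕ Fin q) ℝ) (hP1 : P1 = P.submatrix Sum.inl id)
    (P2 : Matrix (Fin q) (Fin p ⊕ Fin q) ℝ) (hP2 : P2 = P.submatrix Sum.inr id)
    (V : ℕ → (Fin p ⊕ Fin q) → ℝ)
    (D : ℕ → (Fin p ⊕ Fin q) → ℝ)
    (hD : ∀ k, D k = Sum.elim
        (∑ i ∈ Finset.range k, (Jp ^ (k - i - 1)).mulVec (P1.mulVec (V i)))
        (-(∑ i ∈ Finset.range qs, (Hq ^ i).mulVec (P2.mulVec (V (k + i))))))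
    (Y₀ : (Fin p ⊕ Fin q) → ℝ)
    (Z₀ : Fin p → ℝ) (hZ₀ : Y₀ = Qp.mulVec Z₀ + Q.mulVec (D 0))
    (Y : ℕ → (Fin p ⊕ Fin q) → ℝ)
    (hY : ∀ k, F.mulVec (Y (k + 1)) = G.mulVec (Y k) + V k)
    (hY0 : Y 0 = Y₀) :
    (∀ k, Y k = Qp.mulVec ((Jp ^ k).mulVec Z₀) + Q.mulVec (D k)) ∧
      (∀ Y' : ℕ → (Fin p ⊕ Fin q) → ℝ,
        (∀ k, F.mulVec (Y' (k + 1)) = G.mulVec (Y' k) + V k) → Y' 0 = Y₀ → Y' = Y) := by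
  obtain rfl : D = weierstrassParticular Jp Hq qs (fun k => P *ᵥ V k) :=
    funext fun k => by rw [hD, hP1, hP2]; rfl
  subst hQp
  exact proposition_2_2_uniqueness_general hQ hH hF hG hZ₀ hY hY0
end

section
/- Homogeneous form of Theorem 2.1: a sequence Y : ℕ → ℝ^m satisfies F · Y_{k+1} = G · Y_k for all k ≥ 0 if and only if there exists C ∈ ℝ^p such that Y_k = Q_p · J_p^k · C for all k ≥ 0. -/
open Matrix Finset

/-!
Multiplying by `P` and substituting `Y k = Q Z k` decouples the system into `u (k + 1) = J u k` and
`H v (k + 1) = v k`. The first is solved by `u k = J ^ k u 0`. The second runs backwards in time: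
`v k = H ^ n v (k + n)` for every `n`, so nilpotency of `H` forces `v = 0`.
-/

section Recurrences

variable {R n : Type*} [Semiring R] [Fintype n] [DecidableEq n]

theorem forall_succ_eq_mulVec_iff {A : Matrix n n R} {x : ℕ → n → R} :
    (∀ k, x (k + 1) = A *ᵥ x k) ↔ ∃ c, ∀ k, x k = A ^ k *ᵥ c := by
  constructor
  · intro h
    refine ⟨x 0, fun k => ?_⟩
    induction k with
    | zero => simp
    | succ k ih => rw [h, ih, mulVec_mulVec, ← pow_succ']
  · rintro ⟨c, hc⟩ k
    rw [hc, hc, mulVec_mulVec, ← pow_succ']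

theorem pow_mulVec_add_of_mulVec_succ {A : Matrix n n R} {x : ℕ → n → R}
    (h : ∀ k, A *ᵥ x (k + 1) = x k) (i k : ℕ) : A ^ i *ᵥ x (k + i) = x k := by
  induction i with
  | zero => simp
  | succ i ih => rw [pow_succ, ← mulVec_mulVec, ← add_assoc, h, ih]

theorem forall_mulVec_succ_eq_iff_of_isNilpotent {A : Matrix n n R} (hA : IsNilpotent A)
    {x : ℕ → n → R} : (∀ k, A *ᵥ x (k + 1) = x k) ↔ ∀ k, x k = 0 := by
  refine ⟨fun h k => ?_, fun h k => by rw [h, h, mulVec_zero]⟩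
  obtain ⟨i, hi⟩ := hA
  rw [← pow_mulVec_add_of_mulVec_succ h i k, hi, zero_mulVec]

end Recurrences

theorem eq_sumElim_iff {α β γ : Type*} {f : α ⊕ β → γ} {g : α → γ} {h : β → γ} :
    f = Sum.elim g h ↔ f ∘ Sum.inl = g ∧ f ∘ Sum.inr = h := by
  rw [← Sum.elim_eq_iff, Sum.elim_comp_inl_inr]

section Blocks

variable {R m n : Type*} [Fintype m] [Fintype n]

theorem submatrix_inl_mulVec {l : Type*} [NonUnitalNonAssocSemiring R]
    (A : Matrix l (m ⊕ n) R) (v : m → R) :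
    A.submatrix id Sum.inl *ᵥ v = A *ᵥ Sum.elim v 0 := by
  ext i
  simp [mulVec, dotProduct]

variable [Semiring R] [DecidableEq m] [DecidableEq n]

theorem fromBlocks_one_mulVec_eq_fromBlocks_one_mulVec_iff {J : Matrix m m R} {H : Matrix n n R}
    {x y : m ⊕ n → R} :
    fromBlocks 1 0 0 H *ᵥ x = fromBlocks J 0 0 1 *ᵥ y ↔
      x ∘ Sum.inl = J *ᵥ (y ∘ Sum.inl) ∧ H *ᵥ (x ∘ Sum.inr) = y ∘ Sum.inr := by
  simp [fromBlocks_mulVec, Sum.elim_eq_iff]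

theorem forall_fromBlocks_mulVec_succ_eq_iff_of_isNilpotent {J : Matrix m m R} {H : Matrix n n R}
    (hH : IsNilpotent H) {Z : ℕ → m ⊕ n → R} :
    (∀ k, fromBlocks 1 0 0 H *ᵥ Z (k + 1) = fromBlocks J 0 0 1 *ᵥ Z k) ↔
      ∃ C, ∀ k, Z k = Sum.elim (J ^ k *ᵥ C) 0 := by
  simp only [fromBlocks_one_mulVec_eq_fromBlocks_one_mulVec_iff, forall_and,
    forall_succ_eq_mulVec_iff (x := fun k => Z k ∘ Sum.inl),
    forall_mulVec_succ_eq_iff_of_isNilpotent hH (x := fun k => Z k ∘ Sum.inr),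
    eq_sumElim_iff, exists_and_right]

end Blocks

theorem mul_mulVec_eq_mul_mulVec_iff_of_isUnit {R m n : Type*} [Semiring R]
    [Fintype m] [DecidableEq m] [Fintype n] {P : Matrix m m R} (hP : IsUnit P)
    {A B : Matrix m n R} {x y : n → R} :
    (P * A) *ᵥ x = (P * B) *ᵥ y ↔ A *ᵥ x = B *ᵥ y := by
  rw [← mulVec_mulVec, ← mulVec_mulVec, (mulVec_injective_of_isUnit hP).eq_iff]

theorem theorem_2_1_homogeneous_general {R m n : Type*} [Semiring R]
    [Fintype m] [Fintype n] [DecidableEq m] [DecidableEq n]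
    {F G P Q : Matrix (m ⊕ n) (m ⊕ n) R} (hP : IsUnit P) (hQ : IsUnit Q)
    {J : Matrix m m R} {H : Matrix n n R} (hH : IsNilpotent H)
    (hF : P * F * Q = fromBlocks 1 0 0 H) (hG : P * G * Q = fromBlocks J 0 0 1)
    (Y : ℕ → m ⊕ n → R) :
    (∀ k, F *ᵥ Y (k + 1) = G *ᵥ Y k) ↔
      ∃ C, ∀ k, Y k = Q.submatrix id Sum.inl *ᵥ (J ^ k *ᵥ C) := by
  have hQ_surj : Function.Surjective Q.mulVec :=
    mulVec_surjective_iff_exists_right_inverse.2 hQ.exists_right_inv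
  obtain ⟨Z, rfl⟩ := hQ_surj.comp_left Y
  calc (∀ k, F *ᵥ (Q *ᵥ Z (k + 1)) = G *ᵥ (Q *ᵥ Z k))
    _ ↔ ∀ k, fromBlocks 1 0 0 H *ᵥ Z (k + 1) = fromBlocks J 0 0 1 *ᵥ Z k := by
      simp only [← hF, ← hG, mul_assoc, mul_mulVec_eq_mul_mulVec_iff_of_isUnit hP, mulVec_mulVec]
    _ ↔ ∃ C, ∀ k, Z k = Sum.elim (J ^ k *ᵥ C) 0 :=
      forall_fromBlocks_mulVec_succ_eq_iff_of_isNilpotent hH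
    _ ↔ ∃ C, ∀ k, Q *ᵥ Z k = Q.submatrix id Sum.inl *ᵥ (J ^ k *ᵥ C) := by
      simp only [submatrix_inl_mulVec, (mulVec_injective_of_isUnit hQ).eq_iff]

/-- Homogeneous form of Theorem 2.1: `Y` solves `F Y_{k+1} = G Y_k` iff
`Y_k = Q_p J_p^k C` for some constant `C ∈ ℝ^p`. -/
theorem theorem_2_1_homogeneous
    (p q : ℕ) (hp : 1 ≤ p) (hq : 1 ≤ q)
    (F G P Q : Matrix (Fin p ⊕ Fin q) (Fin p ⊕ Fin q) ℝ)
    (hP : IsUnit P) (hQ : IsUnit Q)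
    (Jp : Matrix (Fin p) (Fin p) ℝ) (qs : ℕ) (Hq : Matrix (Fin q) (Fin q) ℝ)
    (hH : Hq ^ qs = 0)
    (hF : P * F * Q = Matrix.fromBlocks 1 0 0 Hq)
    (hG : P * G * Q = Matrix.fromBlocks Jp 0 0 1)
    (Qp : Matrix (Fin p ⊕ Fin q) (Fin p) ℝ) (hQp : Qp = Q.submatrix id Sum.inl)
    (Y : ℕ → (Fin p ⊕ Fin q) → ℝ) :
    (∀ k, F.mulVec (Y (k + 1)) = G.mulVec (Y k)) ↔
      ∃ C : Fin p → ℝ, ∀ k, Y k = Qp.mulVec ((Jp ^ k).mulVec C) := by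
  subst hQp
  exact theorem_2_1_homogeneous_general hP hQ ⟨qs, hH⟩ hF hG Y
end
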